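/- arXiv:1501.05753 — 4 statements merged into one kernel-verified Lean document; each statement's English description precedes it below -/
import Mathlib

section
/- Let ψ : G → H be a homomorphism of countable groups and let φ be a trace on H. (1) If φ satisfies Lück's condition, then the trace φ∘ψ on G satisfies Lück's condition. (2) If ψ is surjective and φ∘ψ satisfies Lück's condition, then φ satisfies Lück's condition. -/
open scoped ComplexOrder ENNReal
open Filter Topology Matrix

set_option synthInstance.maxHeartbeats 1000000
set_option maxHeartbeats 1000000

noncomputable section

instance piLpCompleteSpace {ι : Type*} [Fintype ι] (p : ℝ≥0∞) (β : ι → Type*)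
    [∀ i, UniformSpace (β i)] [∀ i, CompleteSpace (β i)] : CompleteSpace (PiLp p β) :=
  PiLp.completeSpace p β

/-- `φ : G → ℂ` is of positive type: for every finite family `g₁, …, g_m` of elements of
`G`, the matrix `(φ (gᵢ⁻¹ gⱼ))_{i,j}` is positive semidefinite. -/
def IsPosType {G : Type*} [Group G] (φ : G → ℂ) : Prop :=
  ∀ (m : ℕ) (g : Fin m → G), (Matrix.of fun i j => φ ((g i)⁻¹ * g j)).PosSemidef

/-- A trace on a (discrete) group: a function of positive type, constant on conjugacy
classes. -/
def IsGroupTrace {G : Type*} [Group G] (φ : G → ℂ) : Prop :=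
  IsPosType φ ∧ ∀ g h : G, φ (h * g * h⁻¹) = φ g

/-- GNS representation data for a function `φ` on a group `G`: a Hilbert space `H`, a
unital algebra morphism `π` from `ℂG = MonoidAlgebra ℂ G` to the bounded operators on `H`
sending group elements to unitaries (this is the condition `star_of`), and a cyclic vector
`ξ` whose matrix coefficient is (the linear extension of) `φ`. -/
structure GNSRep (G : Type*) [Group G] (φ : G → ℂ) where
  H : Type
  [instNormed : NormedAddCommGroup H]
  [instInner : InnerProductSpace ℂ H]
  [instComplete : CompleteSpace H]
  π : MonoidAlgebra ℂ G →ₐ[ℂ] (H →L[ℂ] H)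
  ξ : H
  star_of : ∀ g : G, star (π (MonoidAlgebra.of ℂ G g)) = π (MonoidAlgebra.of ℂ G g⁻¹)
  inner_eq : ∀ g : G, (inner ℂ ξ (π (MonoidAlgebra.of ℂ G g) ξ) : ℂ) = φ g
  cyclic : Dense (Set.range fun x : MonoidAlgebra ℂ G => π x ξ)

attribute [instance] GNSRep.instNormed GNSRep.instInner GNSRep.instComplete

/-- The vector `ξᵢ ∈ Hⁿ`: the cyclic vector `ξ` in the `i`-th summand, `0` elsewhere. -/
def GNSRep.vec {G : Type*} [Group G] {φ : G → ℂ} (R : GNSRep G φ) {n : ℕ} (i : Fin n) :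
    PiLp 2 (fun _ : Fin n => R.H) :=
  (PiLp.continuousLinearEquiv 2 ℂ (fun _ : Fin n => R.H)).symm (Pi.single i R.ξ)

/-- `|x| = (x* x)^{1/2}`, via the continuous functional calculus. -/
def cfcAbs {A : Type*} [CStarAlgebra A] (x : A) : A := cfc Real.sqrt (star x * x)

/-- The set of continuous majorants of `ln₊` on `[0,∞)`.  (Recall that `Real.log 0 = 0`,
so that `Real.log` agrees with `ln₊` on `[0,∞)`.) -/
def lnPlusMajorants : Set (ℝ → ℝ) :=
  {g | ContinuousOn g (Set.Ici 0) ∧ ∀ t ∈ Set.Ici (0:ℝ), Real.log t ≤ g t}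

/-- The action of a matrix `a ∈ Mₙ(R)` on the Hilbert space `H'ⁿ` (with its `ℓ²` inner
product) induced by a morphism `π : R → B(H')`: `(π_n(a) v)_i = Σ_j π(a i j) (v j)`. -/
def matAct {R H' : Type*} [Ring R] [Algebra ℂ R] [NormedAddCommGroup H']
    [InnerProductSpace ℂ H'] {n : ℕ}
    (π : R →ₐ[ℂ] (H' →L[ℂ] H')) (a : Matrix (Fin n) (Fin n) R) :
    PiLp 2 (fun _ : Fin n => H') →L[ℂ] PiLp 2 (fun _ : Fin n => H') :=
  (PiLp.continuousLinearEquiv 2 ℂ _).symm.toContinuousLinearMap ∘L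
    (ContinuousLinearMap.pi fun i => ∑ j, (π (a i j)).comp (ContinuousLinearMap.proj j)) ∘L
    (PiLp.continuousLinearEquiv 2 ℂ _).toContinuousLinearMap

/-- `(φ ⊗ Trₙ)(ln₊ |a|) := inf { Σᵢ ⟨ξᵢ, g(|π(a)|) ξᵢ⟩ : g : [0,∞) → ℝ continuous, g ≥ ln₊ }`,
an element of `ℝ ∪ {−∞}`, computed in the GNS representation `R`. -/
def GNSRep.lnPlusQ {G : Type*} [Group G] {φ : G → ℂ} (R : GNSRep G φ) {n : ℕ}
    (a : Matrix (Fin n) (Fin n) (MonoidAlgebra ℂ G)) : EReal :=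
  ⨅ g ∈ lnPlusMajorants,
    ((∑ i, (inner ℂ (R.vec i) (cfc g (cfcAbs (matAct R.π a)) (R.vec i)) : ℂ)).re : EReal)

/-- A function `φ` on `G` satisfies Lück's condition if `(φ ⊗ Trₙ)(ln₊|a|) ≥ 0` for every
`n ≥ 1` and every `a ∈ Mₙ(ℤG)` (an `a ∈ Mₙ(ℂG)` whose coefficients are all integers),
where the quantity is computed in any GNS representation of `φ`. -/
def SatisfiesLueck {G : Type*} [Group G] (φ : G → ℂ) : Prop :=
  ∀ (n : ℕ), 0 < n → ∀ a : Matrix (Fin n) (Fin n) (MonoidAlgebra ℂ G),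
    (∀ (i j : Fin n) (g : G), ∃ m : ℤ, (a i j).coeff g = (m : ℂ)) →
    ∀ R : GNSRep G φ, 0 ≤ R.lnPlusQ a


section helpers

lemma gram_ext {X E F : Type*} [NormedAddCommGroup E] [InnerProductSpace ℂ E]
    [NormedAddCommGroup F] [InnerProductSpace ℂ F] [CompleteSpace F]
    (k : X → E) (k' : X → F)
    (hg : ∀ x y, inner ℂ (k x) (k y) = inner ℂ (k' x) (k' y))
    (hd : Dense (Submodule.span ℂ (Set.range k) : Set E)) :
    ∃ V : E →L[ℂ] F, (∀ x, V (k x) = k' x) ∧ ∀ u v, inner ℂ (V u) (V v) = inner ℂ u v := by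
  let e := Finsupp.linearCombination ℂ k
  let f := Finsupp.linearCombination ℂ k'
  have hi : ∀ a b, inner ℂ (f a) (f b) = inner ℂ (e a) (e b) := by
    intro a b
    simp only [e, f, Finsupp.linearCombination_apply, Finsupp.sum_inner, Finsupp.inner_sum,
      inner_smul_left, inner_smul_right, hg]
  have hde : DenseRange e := by
    unfold DenseRange
    have : Set.range e = (Submodule.span ℂ (Set.range k) : Set E) := by
      rw [← Finsupp.range_linearCombination]; rfl
    rw [this]; exact hd
  have hn : ∃ C, ∀ a, ‖f a‖ ≤ C * ‖e a‖ := by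
    refine ⟨1, fun a => ?_⟩
    rw [one_mul, norm_eq_sqrt_re_inner (𝕜 := ℂ), norm_eq_sqrt_re_inner (𝕜 := ℂ) (e a), hi]
  refine ⟨f.extendOfNorm e, fun x => ?_, fun u v => ?_⟩
  · have := LinearMap.extendOfNorm_eq hde hn (Finsupp.single x 1)
    simpa [e, f] using this
  · refine hde.induction_on₂ (p := fun u v =>
      inner ℂ (f.extendOfNorm e u) (f.extendOfNorm e v) = inner ℂ u v) ?_ ?_ u v
    · exact isClosed_eq (by fun_prop) (by fun_prop)
    · intro a b
      rw [LinearMap.extendOfNorm_eq hde hn, LinearMap.extendOfNorm_eq hde hn, hi]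

lemma span_ext {X E F : Type*} [NormedAddCommGroup E] [InnerProductSpace ℂ E]
    [NormedAddCommGroup F] [InnerProductSpace ℂ F] {k : X → E}
    (hd : Dense (Submodule.span ℂ (Set.range k) : Set E)) (A B : E →L[ℂ] F)
    (h : ∀ x, A (k x) = B (k x)) : A = B := by
  apply ContinuousLinearMap.ext_on hd
  rintro _ ⟨x, rfl⟩
  exact h x

lemma cfc_intertwine {E F : Type*} [NormedAddCommGroup E] [InnerProductSpace ℂ E]
    [CompleteSpace E] [NormedAddCommGroup F] [InnerProductSpace ℂ F] [CompleteSpace F]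
    (S : E →L[ℂ] E) (T : F →L[ℂ] F) (V : E →L[ℂ] F) (hS : IsSelfAdjoint S)
    (hT : IsSelfAdjoint T) (hV : V ∘L S = T ∘L V) (g : ℝ → ℝ)
    (hg : ContinuousOn g (spectrum ℝ S ∪ spectrum ℝ T)) :
    V ∘L cfc g S = cfc g T ∘L V := by
  let K := spectrum ℝ S ∪ spectrum ℝ T
  have hK : IsCompact K := (ContinuousFunctionalCalculus.isCompact_spectrum S).union
    (ContinuousFunctionalCalculus.isCompact_spectrum T)
  have : CompactSpace K := isCompact_iff_compactSpace.mp hK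
  let iS : C(spectrum ℝ S, K) := ⟨Set.inclusion Set.subset_union_left, continuous_inclusion _⟩
  let iT : C(spectrum ℝ T, K) := ⟨Set.inclusion Set.subset_union_right, continuous_inclusion _⟩
  have key : ∀ f : C(K, ℝ), V ∘L cfcHom hS (f.comp iS) = cfcHom hT (f.comp iT) ∘L V := by
    intro f
    induction f using ContinuousMap.induction_on_of_compact with
    | const r =>
      have h1 : (ContinuousMap.const K r).comp iS = algebraMap ℝ _ r := rfl
      have h2 : (ContinuousMap.const K r).comp iT = algebraMap ℝ _ r := rfl
      rw [h1, h2, AlgHomClass.commutes, AlgHomClass.commutes]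
      ext x
      simp [Algebra.algebraMap_eq_smul_one]
    | id =>
      have h1 : (ContinuousMap.restrict K (.id ℝ)).comp iS = .restrict _ (.id ℝ) := rfl
      have h2 : (ContinuousMap.restrict K (.id ℝ)).comp iT = .restrict _ (.id ℝ) := rfl
      rw [h1, h2, cfcHom_id, cfcHom_id, hV]
    | star_id =>
      have h1 : (star (ContinuousMap.restrict K (.id ℝ))).comp iS = .restrict _ (.id ℝ) := rfl
      have h2 : (star (ContinuousMap.restrict K (.id ℝ))).comp iT = .restrict _ (.id ℝ) := rfl
      rw [h1, h2, cfcHom_id, cfcHom_id, hV]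
    | add f g hf hg =>
      rw [ContinuousMap.add_comp, ContinuousMap.add_comp, map_add, map_add,
        ContinuousLinearMap.comp_add, ContinuousLinearMap.add_comp, hf, hg]
    | mul f g hf hg =>
      rw [ContinuousMap.mul_comp, ContinuousMap.mul_comp, map_mul, map_mul]
      ext x
      have e1 := fun x => DFunLike.congr_fun hf x
      have e2 := fun x => DFunLike.congr_fun hg x
      simp only [ContinuousLinearMap.comp_apply] at e1 e2
      simp [e1, e2]
    | frequently f h =>
      have hc : IsClosed {f : C(K, ℝ) |
          V ∘L cfcHom hS (f.comp iS) = cfcHom hT (f.comp iT) ∘L V} := by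
        have c1 : Continuous fun f : C(K, ℝ) => cfcHom hS (f.comp iS) :=
          (cfcHom_continuous hS).comp (ContinuousMap.continuous_precomp iS)
        have c2 : Continuous fun f : C(K, ℝ) => cfcHom hT (f.comp iT) :=
          (cfcHom_continuous hT).comp (ContinuousMap.continuous_precomp iT)
        exact isClosed_eq (by fun_prop) (by fun_prop)
      exact hc.mem_of_frequently_of_tendsto h tendsto_id
  rw [cfc_apply g S hS (hg.mono Set.subset_union_left),
    cfc_apply g T hT (hg.mono Set.subset_union_right)]
  exact key ⟨K.domRestrict g, hg.domRestrict⟩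

lemma matAct_apply {R H' : Type*} [Ring R] [Algebra ℂ R] [NormedAddCommGroup H']
    [InnerProductSpace ℂ H'] {n : ℕ} (π : R →ₐ[ℂ] (H' →L[ℂ] H'))
    (a : Matrix (Fin n) (Fin n) R) (v : PiLp 2 (fun _ : Fin n => H')) (i : Fin n) :
    matAct π a v i = ∑ j, π (a i j) (v j) := by
  simp [matAct]

lemma matAct_star_apply {R H' : Type*} [Ring R] [Algebra ℂ R] [NormedAddCommGroup H']
    [InnerProductSpace ℂ H'] [CompleteSpace H'] {n : ℕ} (π : R →ₐ[ℂ] (H' →L[ℂ] H'))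
    (a : Matrix (Fin n) (Fin n) R) (v : PiLp 2 (fun _ : Fin n => H')) (i : Fin n) :
    (star (matAct π a) v) i = ∑ j, (star (π (a j i))) (v j) := by
  apply ext_inner_left ℂ
  intro w
  have h := ContinuousLinearMap.adjoint_inner_right (matAct π a) (PiLp.single 2 i w) v
  rw [← ContinuousLinearMap.star_eq_adjoint] at h
  simp only [PiLp.inner_apply, matAct_apply] at h
  rw [Finset.sum_eq_single i (by intro b _ hb; simp [hb]) (by simp)] at h
  simp only [PiLp.single_apply] at h
  rw [inner_sum]
  simp only [ContinuousLinearMap.star_eq_adjoint, ContinuousLinearMap.adjoint_inner_right]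
  rw [ContinuousLinearMap.star_eq_adjoint] at h
  simpa [Pi.single_apply, apply_ite, sum_inner] using h

/-- amplification -/
def ampl {E F : Type*} [NormedAddCommGroup E] [InnerProductSpace ℂ E]
    [NormedAddCommGroup F] [InnerProductSpace ℂ F] (n : ℕ) (V : E →L[ℂ] F) :
    PiLp 2 (fun _ : Fin n => E) →L[ℂ] PiLp 2 (fun _ : Fin n => F) :=
  (PiLp.continuousLinearEquiv 2 ℂ _).symm.toContinuousLinearMap ∘L
    (ContinuousLinearMap.pi fun i => V.comp (ContinuousLinearMap.proj i)) ∘L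
    (PiLp.continuousLinearEquiv 2 ℂ _).toContinuousLinearMap

lemma ampl_apply {E F : Type*} [NormedAddCommGroup E] [InnerProductSpace ℂ E]
    [NormedAddCommGroup F] [InnerProductSpace ℂ F] (n : ℕ) (V : E →L[ℂ] F)
    (v : PiLp 2 (fun _ : Fin n => E)) (i : Fin n) : ampl n V v i = V (v i) := by
  simp [ampl]

lemma cfcAbs_selfAdjoint {A : Type*} [CStarAlgebra A] (x : A) : IsSelfAdjoint (cfcAbs x) :=
  cfc_predicate _ _

lemma cfcAbs_spectrum {A : Type*} [CStarAlgebra A] (x : A) :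
    spectrum ℝ (cfcAbs x) ⊆ Set.Ici 0 := by
  unfold cfcAbs
  rw [cfc_map_spectrum Real.sqrt (star x * x) (IsSelfAdjoint.star_mul_self x)
    Real.continuous_sqrt.continuousOn]
  rintro _ ⟨t, _, rfl⟩
  exact Real.sqrt_nonneg t

/-- Key comparison. -/
lemma compare {G H : Type*} [Group G] [Group H] {α : G → ℂ} {φ : H → ℂ}
    (R : GNSRep G α) (R' : GNSRep H φ) {n : ℕ}
    (a : Matrix (Fin n) (Fin n) (MonoidAlgebra ℂ G))
    (b : Matrix (Fin n) (Fin n) (MonoidAlgebra ℂ H))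
    (V : R.H →L[ℂ] R'.H) (hξ : V R.ξ = R'.ξ) (hV : ∀ u v, inner ℂ (V u) (V v) = inner ℂ u v)
    (h1 : ∀ i j u, V (R.π (a i j) u) = R'.π (b i j) (V u))
    (h2 : ∀ i j u, V (star (R.π (a i j)) u) = star (R'.π (b i j)) (V u)) :
    R.lnPlusQ a = R'.lnPlusQ b := by
  unfold GNSRep.lnPlusQ
  refine iInf_congr fun g => iInf_congr fun hg => ?_
  have m1 : ∀ u, ampl n V (matAct R.π a u) = matAct R'.π b (ampl n V u) := by
    intro u; ext i
    simp only [ampl_apply, matAct_apply, map_sum, h1]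
  have m2 : ∀ u, ampl n V (star (matAct R.π a) u) = star (matAct R'.π b) (ampl n V u) := by
    intro u; ext i
    rw [ampl_apply, matAct_star_apply, matAct_star_apply, map_sum]
    simp only [ampl_apply, h2]
  have m3 : ampl n V ∘L (star (matAct R.π a) * matAct R.π a)
      = (star (matAct R'.π b) * matAct R'.π b) ∘L ampl n V := by
    ext1 u
    change ampl n V (star (matAct R.π a) (matAct R.π a u)) = star (matAct R'.π b) (matAct R'.π b (ampl n V u))
    rw [m2, m1]
  have m4 : ampl n V ∘L cfcAbs (matAct R.π a) = cfcAbs (matAct R'.π b) ∘L ampl n V :=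
    cfc_intertwine _ _ _ (IsSelfAdjoint.star_mul_self _) (IsSelfAdjoint.star_mul_self _) m3 _
      Real.continuous_sqrt.continuousOn
  have m5 := cfc_intertwine _ _ _ (cfcAbs_selfAdjoint _) (cfcAbs_selfAdjoint _) m4 g
    (hg.1.mono (Set.union_subset (cfcAbs_spectrum _) (cfcAbs_spectrum _)))
  have hinn : ∀ u v, inner ℂ (ampl n V u) (ampl n V v) = inner ℂ u v := by
    intro u v
    simp only [PiLp.inner_apply, ampl_apply, hV]
  have hvec : ∀ i : Fin n, ampl n V (R.vec i) = R'.vec i := by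
    intro i; ext j
    rw [ampl_apply]
    by_cases hij : j = i
    · subst hij; simp [GNSRep.vec, hξ]
    · simp [GNSRep.vec, hij]
  congr 3
  ext i
  rw [← hvec, ← hinn]
  congr 1
  exact DFunLike.congr_fun m5 (R.vec i)


/-- Pullback of a GNS representation along a surjective homomorphism. -/
def pullGNS {G H : Type*} [Group G] [Group H] {φ : H → ℂ} (ψ : G →* H)
    (hψ : Function.Surjective ψ) (R : GNSRep H φ) : GNSRep G (φ ∘ ψ) where
  H := R.H
  π := R.π.comp (MonoidAlgebra.mapDomainAlgHom ℂ ℂ ψ)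
  ξ := R.ξ
  star_of g := by simpa using R.star_of (ψ g)
  inner_eq g := by simpa using R.inner_eq (ψ g)
  cyclic := by
    have hs : Function.Surjective (MonoidAlgebra.mapDomainAlgHom ℂ ℂ ψ) := by
      intro x
      induction x using MonoidAlgebra.induction_on with
      | of h =>
        obtain ⟨g, rfl⟩ := hψ h
        exact ⟨MonoidAlgebra.of ℂ G g, by simp⟩
      | add f g hf hg =>
        obtain ⟨a, rfl⟩ := hf
        obtain ⟨b, rfl⟩ := hg
        exact ⟨a + b, map_add _ _ _⟩
      | smul r f hf =>
        obtain ⟨a, rfl⟩ := hf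
        exact ⟨r • a, map_smul _ _ _⟩
    have : (Set.range fun x : MonoidAlgebra ℂ G =>
        (R.π.comp (MonoidAlgebra.mapDomainAlgHom ℂ ℂ ψ)) x R.ξ)
        = Set.range fun x : MonoidAlgebra ℂ H => R.π x R.ξ :=
      hs.range_comp (fun x : MonoidAlgebra ℂ H => R.π x R.ξ)
    rw [this]
    exact R.cyclic

lemma int_mapDomain {G H : Type*} (f : G → H) (a : MonoidAlgebra ℂ G)
    (ha : ∀ g, ∃ m : ℤ, a.coeff g = (m : ℂ)) (h : H) :
    ∃ m : ℤ, (MonoidAlgebra.mapDomain f a).coeff h = (m : ℂ) := by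
  classical
  choose m hm using ha
  refine ⟨∑ g ∈ a.coeff.support, if f g = h then m g else 0, ?_⟩
  simp [MonoidAlgebra.mapDomain, Finsupp.mapDomain, Finsupp.sum, Finsupp.finsetSum_apply,
    Finsupp.single_apply, hm]

lemma rep_span_dense {G : Type*} [Group G] {φ : G → ℂ} (R : GNSRep G φ) :
    Dense (Submodule.span ℂ (Set.range fun g : G => R.π (MonoidAlgebra.of ℂ G g) R.ξ)
      : Set R.H) := by
  refine R.cyclic.mono ?_
  rintro _ ⟨x, rfl⟩
  induction x using MonoidAlgebra.induction_on with
  | of g => exact Submodule.subset_span ⟨g, rfl⟩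
  | add f g hf hg =>
    simp only [map_add, ContinuousLinearMap.add_apply]
    exact Submodule.add_mem _ hf hg
  | smul r f hf =>
    simp only [map_smul, ContinuousLinearMap.smul_apply]
    exact Submodule.smul_mem _ r hf

lemma rep_gram {G : Type*} [Group G] {φ : G → ℂ} (R : GNSRep G φ) (g h : G) :
    inner ℂ (R.π (MonoidAlgebra.of ℂ G g) R.ξ) (R.π (MonoidAlgebra.of ℂ G h) R.ξ)
      = φ (g⁻¹ * h) := by
  rw [← R.inner_eq, map_mul, map_mul, ← R.star_of, ContinuousLinearMap.star_eq_adjoint]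
  exact (ContinuousLinearMap.adjoint_inner_right _ _ _).symm

lemma compare_hom {G H : Type*} [Group G] [Group H] {φ : H → ℂ} (ψ : G →* H)
    (R : GNSRep G (φ ∘ ψ)) (R' : GNSRep H φ) {n : ℕ}
    (a : Matrix (Fin n) (Fin n) (MonoidAlgebra ℂ G)) :
    R.lnPlusQ a = R'.lnPlusQ (fun i j => MonoidAlgebra.mapDomainAlgHom ℂ ℂ ψ (a i j)) := by
  obtain ⟨V, hV, hin⟩ := gram_ext
    (fun g : G => R.π (MonoidAlgebra.of ℂ G g) R.ξ)
    (fun g : G => R'.π (MonoidAlgebra.of ℂ H (ψ g)) R'.ξ)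
    (by intro g h; rw [rep_gram, rep_gram]; simp) (rep_span_dense R)
  have hg : ∀ g : G, V ∘L R.π (MonoidAlgebra.of ℂ G g) =
      R'.π (MonoidAlgebra.of ℂ H (ψ g)) ∘L V := by
    intro g
    refine span_ext (rep_span_dense R) _ _ fun h => ?_
    have e1 := hV (g * h)
    rw [map_mul, map_mul, map_mul, map_mul, map_mul] at e1
    simp only [ContinuousLinearMap.comp_apply]
    rw [hV]
    exact e1
  have h12 : ∀ x : MonoidAlgebra ℂ G,
      (V ∘L R.π x = R'.π (MonoidAlgebra.mapDomainAlgHom ℂ ℂ ψ x) ∘L V) ∧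
      (V ∘L star (R.π x) = star (R'.π (MonoidAlgebra.mapDomainAlgHom ℂ ℂ ψ x)) ∘L V) := by
    intro x
    induction x using MonoidAlgebra.induction_on with
    | of g =>
      have e : MonoidAlgebra.mapDomainAlgHom ℂ ℂ ψ (MonoidAlgebra.of ℂ G g)
        = MonoidAlgebra.of ℂ H (ψ g) := by simp
      rw [e, R.star_of, R'.star_of, ← map_inv ψ]
      exact ⟨hg g, hg g⁻¹⟩
    | add f g hf hg =>
      simp only [map_add, star_add, ContinuousLinearMap.comp_add, ContinuousLinearMap.add_comp,
        hf.1, hg.1, hf.2, hg.2, and_self]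
    | smul r f hf =>
      simp only [map_smul, star_smul, ContinuousLinearMap.comp_smul,
        ContinuousLinearMap.smul_comp, hf.1, hf.2, and_self]
  refine compare R R' a _ V ?_ hin ?_ ?_
  · have h1 := hV 1
    simp only [map_one] at h1
    exact h1
  · exact fun i j u => DFunLike.congr_fun (h12 (a i j)).1 u
  · exact fun i j u => DFunLike.congr_fun (h12 (a i j)).2 u

lemma exists_kernel {K : Type} [Group K] (φ : K → ℂ) (hφ : IsPosType φ) :
    ∃ (E : Type) (_ : NormedAddCommGroup E) (_ : InnerProductSpace ℂ E) (_ : CompleteSpace E)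
      (k : K → E), (∀ x y, inner ℂ (k x) (k y) = φ (x⁻¹ * y)) ∧
      Dense (Submodule.span ℂ (Set.range k) : Set E) := by
  let M : Matrix K K (ℂ →L[ℂ] ℂ) := Matrix.of fun x y => φ (x⁻¹ * y) • ContinuousLinearMap.id ℂ ℂ
  have hherm : ∀ x y, star (φ (x⁻¹ * y)) = φ (y⁻¹ * x) := by
    intro x y
    have := (hφ 2 ![x, y]).isHermitian.apply 1 0
    simpa using this
  have hM : M.PosSemidef := by
    have htf := (RKHS.posSemidef_tfae (K := M)).out 0 2
    refine htf.mpr ⟨?_, ?_⟩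
    · ext x y
      simp only [M, Matrix.conjTranspose_apply, Matrix.of_apply, star_smul, hherm]
      have hid : star (ContinuousLinearMap.id ℂ ℂ) = ContinuousLinearMap.id ℂ ℂ :=
        star_one (ℂ →L[ℂ] ℂ)
      rw [hid]
    · intro v
      let e := v.support.equivFin.symm
      have h := (hφ v.support.card (fun i => (e i : K))).re_dotProduct_nonneg
        (fun i => v (e i))
      have hs : ∀ f : K → ℂ, ∑ i, f (e i) = ∑ x ∈ v.support, f x := by
        intro f
        rw [e.sum_comp (fun x : v.support => f x), Finset.sum_coe_sort]
      simp only [dotProduct, Matrix.mulVec, Matrix.of_apply, Pi.star_apply] at h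
      rw [hs (fun x => star (v x) * ∑ j, φ (x⁻¹ * e j) * v (e j))] at h
      have hs2 : ∀ x, ∑ j, φ (x⁻¹ * e j) * v (e j) = ∑ y ∈ v.support, φ (x⁻¹ * y) * v y :=
        fun x => hs (fun y => φ (x⁻¹ * y) * v y)
      simp only [hs2] at h
      convert h using 2
      simp only [Finsupp.sum, M, Matrix.of_apply]
      refine Finset.sum_congr rfl fun x _ => ?_
      rw [Finset.mul_sum]
      refine Finset.sum_congr rfl fun y _ => ?_
      have := hherm y x
      simp only [RCLike.star_def] at this
      simp [this]
      ring
  have : Fact M.PosSemidef := ⟨hM⟩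
  refine ⟨RKHS.OfKernel M, inferInstance, inferInstance, inferInstance,
    fun x => RKHS.kerFun (RKHS.OfKernel M) x 1, ?_, ?_⟩
  · intro x y
    rw [← RKHS.kernel_inner, RKHS.OfKernel.kernel_ofKernel]
    have := hherm y x
    simp only [RCLike.star_def] at this
    simp [M, this]
  · have h := RKHS.kerFun_dense (RKHS.OfKernel M)
    rw [← Submodule.dense_iff_topologicalClosure_eq_top] at h
    refine h.mono ?_
    refine SetLike.coe_subset_coe.mpr (Submodule.span_le.mpr ?_)
    rintro _ ⟨x, v, rfl⟩
    have : RKHS.kerFun (RKHS.OfKernel M) x v = v • RKHS.kerFun (RKHS.OfKernel M) x 1 := by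
      rw [← map_smul]; simp
    rw [this]
    exact Submodule.smul_mem _ _ (Submodule.subset_span ⟨x, rfl⟩)

lemma exists_gns0 {K : Type} [Group K] (φ : K → ℂ) (hφ : IsPosType φ) :
    Nonempty (GNSRep K φ) := by
  obtain ⟨E, _, _, _, k, hk, hd⟩ := exists_kernel φ hφ
  have hU : ∀ g : K, ∃ V : E →L[ℂ] E, (∀ x, V (k x) = k (g * x)) ∧
      ∀ u v, inner ℂ (V u) (V v) = inner ℂ u v := fun g =>
    gram_ext k (fun x => k (g * x)) (by intro x y; rw [hk, hk]; congr 1; group) hd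
  choose U hU hUi using hU
  let Um : K →* (E →L[ℂ] E) :=
    { toFun := U
      map_one' := span_ext hd _ _ fun x => by simp [hU]
      map_mul' := fun g h => span_ext hd _ _ fun x => by simp [hU, mul_assoc] }
  have hof : ∀ g, MonoidAlgebra.lift ℂ (E →L[ℂ] E) K Um (MonoidAlgebra.of ℂ K g) = U g := by
    intro g; rw [MonoidAlgebra.lift_of]; rfl
  refine ⟨{ H := E, π := MonoidAlgebra.lift ℂ (E →L[ℂ] E) K Um, ξ := k 1,
            star_of := ?_, inner_eq := ?_, cyclic := ?_ }⟩
  · intro g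
    rw [hof, hof, ContinuousLinearMap.star_eq_adjoint]
    symm
    rw [ContinuousLinearMap.eq_adjoint_iff]
    intro u v
    rw [← hUi g]
    have : U g (U g⁻¹ u) = u := by
      have : U g * U g⁻¹ = 1 := by
        change Um g * Um g⁻¹ = 1
        rw [← map_mul]; simp
      exact DFunLike.congr_fun this u
    rw [this]
  · intro g
    rw [hof, hU, hk]; simp
  · have hr : (Set.range fun x : MonoidAlgebra ℂ K =>
        MonoidAlgebra.lift ℂ (E →L[ℂ] E) K Um x (k 1))
        = LinearMap.range (((ContinuousLinearMap.apply ℂ E (k 1)).toLinearMap).comp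
          (MonoidAlgebra.lift ℂ (E →L[ℂ] E) K Um).toLinearMap) := by
      ext; simp
    rw [hr]
    refine hd.mono ?_
    refine SetLike.coe_subset_coe.mpr (Submodule.span_le.mpr ?_)
    rintro _ ⟨x, rfl⟩
    refine ⟨MonoidAlgebra.of ℂ K x, ?_⟩
    change MonoidAlgebra.lift ℂ (E →L[ℂ] E) K Um (MonoidAlgebra.of ℂ K x) (k 1) = k x
    rw [hof, hU, mul_one]

lemma exists_gns {H : Type*} [Group H] [Countable H] (φ : H → ℂ) (hφ : IsPosType φ) :
    Nonempty (GNSRep H φ) := by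
  let e : H ≃* Shrink.{0} H := Shrink.mulEquiv.symm
  obtain ⟨R⟩ := exists_gns0 (φ ∘ e.symm) (by
    intro m g
    have := hφ m (fun i => e.symm (g i))
    simpa using this)
  have h := pullGNS e.toMonoidHom e.surjective R
  have he : (φ ∘ e.symm) ∘ e.toMonoidHom = φ := by
    ext x; simp
  rw [he] at h
  exact ⟨h⟩

end helpers

/-- let `ψ : G → H` be a homomorphism of countable groups and `φ` a trace on
`H`.  (1) If `φ` satisfies Lück's condition then so does `φ ∘ ψ`.  (2) If `ψ` is onto and
`φ ∘ ψ` satisfies Lück's condition, then so does `φ`. -/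
theorem stmt2 {G H : Type*} [Group G] [Group H] [Countable G] [Countable H]
    (ψ : G →* H) (φ : H → ℂ) (hφ : IsGroupTrace φ) :
    (SatisfiesLueck φ → SatisfiesLueck (φ ∘ ψ)) ∧
    (Function.Surjective ψ → SatisfiesLueck (φ ∘ ψ) → SatisfiesLueck φ) := by

  constructor
  · intro h n hn a ha R
    obtain ⟨R'⟩ := exists_gns φ hφ.1
    rw [compare_hom ψ R R' a]
    exact h n hn _ (fun i j g => int_mapDomain ψ (a i j) (ha i j) g) R'
  · intro hs h n hn b hb R
    obtain ⟨s, hsec⟩ := hs.hasRightInverse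
    have key := h n hn (fun i j => MonoidAlgebra.mapDomain s (b i j))
      (fun i j g => int_mapDomain s (b i j) (hb i j) g) (pullGNS ψ hs R)
    replace key := key.trans_eq (compare_hom ψ (pullGNS ψ hs R) R _)
    have e : (fun i j => MonoidAlgebra.mapDomainAlgHom ℂ ℂ ψ
        (MonoidAlgebra.mapDomain s (b i j))) = b := by
      funext i j
      change MonoidAlgebra.mapDomain ψ (MonoidAlgebra.mapDomain s (b i j)) = b i j
      have hc : ψ ∘ s = id := funext hsec
      simp [MonoidAlgebra.mapDomain, ← Finsupp.mapDomain_comp, hc]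
    rw [e] at key
    exact key

end
end

section
/- Let Γ be a countable group and τ_Γ its canonical trace (τ_Γ(x) = 1 if x = 1, and 0 otherwise). The following are equivalent: (i) Γ is sofic; (ii) there exists a group G and a surjective group homomorphism φ : G → Γ such that the function τ_Γ∘φ : G → ℂ is a pointwise limit of permutational traces on G; (iii) for every surjective group homomorphism φ : F_∞ → Γ from the free group F_∞ on countably many generators, the function τ_Γ∘φ : F_∞ → ℂ is a pointwise limit of permutational traces on F_∞. -/
open scoped ComplexOrder ENNReal
open Filter Topology Matrix

set_option synthInstance.maxHeartbeats 1000000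
set_option maxHeartbeats 1000000

noncomputable section

/-- `τ_k(σ) = card {x | σ x = x} / k`, the fixed-point ratio of a permutation. -/
def permFixRatio {k : ℕ} (σ : Equiv.Perm (Fin k)) : ℝ :=
  (Finset.univ.filter fun x => σ x = x).card / k

/-- `δ_k(σ₁, σ₂) = card {x | σ₁ x ≠ σ₂ x} / k`, the normalized Hamming distance. -/
def permHamming {k : ℕ} (σ₁ σ₂ : Equiv.Perm (Fin k)) : ℝ :=
  (Finset.univ.filter fun x => σ₁ x ≠ σ₂ x).card / k

/-- A group `Γ` is sofic: there are maps `f_n : Γ → S_{k_n}` (not necessarily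
homomorphisms) which are asymptotically multiplicative and asymptotically free. -/
def IsSofic (Γ : Type*) [Group Γ] : Prop :=
  ∃ (k : ℕ → ℕ) (f : ∀ n, Γ → Equiv.Perm (Fin (k n))),
    (∀ n, 0 < k n) ∧
    (∀ x y : Γ, Tendsto (fun n => permHamming (f n x * f n y) (f n (x * y))) atTop (𝓝 0)) ∧
    (∀ x : Γ, x ≠ 1 → Tendsto (fun n => permHamming (f n x) 1) atTop (𝓝 1))

open Classical in
/-- The canonical trace on a group: `τ_Γ(x) = 1` if `x = 1` and `0` otherwise. -/
def canonicalTrace (Γ : Type*) [Group Γ] : Γ → ℂ := fun x => if x = 1 then 1 else 0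

/-- A permutational trace on `G`: a function of the form `g ↦ τ_k(π g)` for some `k ≥ 1`
and some group homomorphism `π : G → S_k`. -/
def IsPermutationalTrace {G : Type*} [Group G] (ψ : G → ℂ) : Prop :=
  ∃ (k : ℕ) (_ : 0 < k) (π : G →* Equiv.Perm (Fin k)),
    ψ = fun g => (permFixRatio (π g) : ℂ)

theorem ham_nonneg {k : ℕ} (a b : Equiv.Perm (Fin k)) : 0 ≤ permHamming a b := by
  unfold permHamming; positivity

theorem ham_self {k : ℕ} (a : Equiv.Perm (Fin k)) : permHamming a a = 0 := by
  simp [permHamming]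

theorem ham_comm {k : ℕ} (a b : Equiv.Perm (Fin k)) : permHamming a b = permHamming b a := by
  simp only [permHamming, ne_comm]

theorem ham_tri {k : ℕ} (a b c : Equiv.Perm (Fin k)) :
    permHamming a c ≤ permHamming a b + permHamming b c := by
  unfold permHamming
  rw [← add_div]
  apply div_le_div_of_nonneg_right _ (Nat.cast_nonneg k)
  norm_cast
  refine le_trans (Finset.card_le_card ?_) (Finset.card_union_le _ _)
  intro x
  simp only [Finset.mem_filter, Finset.mem_univ, true_and, Finset.mem_union]
  intro h
  by_contra! h2
  exact h (h2.1.trans h2.2)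

theorem ham_left {k : ℕ} (c a b : Equiv.Perm (Fin k)) :
    permHamming (c * a) (c * b) = permHamming a b := by
  simp [permHamming]

theorem ham_right {k : ℕ} (a b c : Equiv.Perm (Fin k)) :
    permHamming (a * c) (b * c) = permHamming a b := by
  unfold permHamming
  congr 2
  apply Finset.card_bij (fun x _ => c x)
  · intro x hx
    rw [Finset.mem_filter] at hx ⊢
    exact ⟨Finset.mem_univ _, hx.2⟩
  · intro x _ y _ h
    exact c.injective h
  · intro y hy
    rw [Finset.mem_filter] at hy
    refine ⟨c⁻¹ y, ?_, by simp⟩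
    rw [Finset.mem_filter]
    exact ⟨Finset.mem_univ _, by simpa using hy.2⟩

theorem fix_eq {k : ℕ} (hk : 0 < k) (a : Equiv.Perm (Fin k)) :
    permFixRatio a = 1 - permHamming a 1 := by
  have h := Finset.card_filter_add_card_filter_not (s := (Finset.univ : Finset (Fin k)))
    (fun x => a x = x)
  rw [Finset.card_univ, Fintype.card_fin] at h
  have hk' : (k : ℝ) ≠ 0 := by positivity
  have h' : ((Finset.univ.filter fun x => a x = x).card : ℝ) +
    (Finset.univ.filter fun x => ¬ a x = x).card = k := by exact_mod_cast h
  unfold permFixRatio permHamming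
  simp only [Equiv.Perm.one_apply, ne_eq]
  rw [eq_sub_iff_add_eq, ← add_div, div_eq_one_iff_eq hk']
  convert h' using 3
  congr

/-- Asymptotic equality. -/
def AsEq {k : ℕ → ℕ} (a b : ∀ n, Equiv.Perm (Fin (k n))) : Prop :=
  Tendsto (fun n => permHamming (a n) (b n)) atTop (𝓝 0)

section
variable {k : ℕ → ℕ} {a b c d : ∀ n, Equiv.Perm (Fin (k n))}

theorem AsEq.rfl' : AsEq a a := by simp [AsEq, ham_self]

theorem AsEq.symm' (h : AsEq a b) : AsEq b a := by
  simpa only [AsEq, ham_comm] using h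

theorem AsEq.trans' (h : AsEq a b) (h2 : AsEq b c) : AsEq a c := by
  have := Tendsto.add h h2
  rw [add_zero] at this
  exact squeeze_zero (fun n => ham_nonneg _ _) (fun n => ham_tri _ _ _) this

theorem AsEq.left (h : AsEq a b) : AsEq (fun n => c n * a n) (fun n => c n * b n) := by
  simpa only [AsEq, ham_left] using h

theorem AsEq.right (h : AsEq a b) : AsEq (fun n => a n * c n) (fun n => b n * c n) := by
  simpa only [AsEq, ham_right] using h

theorem AsEq.mul' (h : AsEq a b) (h2 : AsEq c d) :
    AsEq (fun n => a n * c n) (fun n => b n * d n) :=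
  h.right.trans' h2.left

theorem AsEq.inv' (h : AsEq a b) : AsEq (fun n => (a n)⁻¹) (fun n => (b n)⁻¹) := by
  have := (h.left (c := fun n => (a n)⁻¹)).right (c := fun n => (b n)⁻¹)
  simpa using this.symm'

theorem AsEq.tendsto {l : ℝ} (h : AsEq a b)
    (hb : Tendsto (fun n => permHamming (b n) 1) atTop (𝓝 l)) :
    Tendsto (fun n => permHamming (a n) 1) atTop (𝓝 l) := by
  have h1 := hb.add h
  have h2 := hb.sub h
  rw [add_zero] at h1
  rw [sub_zero] at h2
  refine tendsto_of_tendsto_of_tendsto_of_le_of_le h2 h1 (fun n => ?_) (fun n => ?_)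
  · have := ham_tri (b n) (a n) 1
    rw [ham_comm (b n) (a n)] at this
    simp only
    linarith
  · have := ham_tri (a n) (b n) 1
    simp only
    linarith
end

theorem sofic_imp {Γ : Type*} [Group Γ] (h : IsSofic Γ) (φ : FreeGroup ℕ →* Γ) :
    ∃ ψ : ℕ → FreeGroup ℕ → ℂ, (∀ m, IsPermutationalTrace (ψ m)) ∧
      ∀ g : FreeGroup ℕ, Tendsto (fun m => ψ m g) atTop (𝓝 (canonicalTrace Γ (φ g))) := by
  obtain ⟨k, f, hk, hmul, hfree⟩ := h
  have hmul' : ∀ x y, AsEq (fun n => f n x * f n y) (fun n => f n (x * y)) := hmul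
  have h1 : AsEq (fun n => f n 1) (fun n => 1) := by
    have := (hmul' 1 1).left (c := fun n => (f n 1)⁻¹)
    simpa using this
  have hinv : ∀ x, AsEq (fun n => (f n x)⁻¹) (fun n => f n x⁻¹) := by
    intro x
    have := ((hmul' x⁻¹ x).trans' (by simpa using h1)).right (c := fun n => (f n x)⁻¹)
    simpa using this.symm'
  let π : ∀ n, FreeGroup ℕ →* Equiv.Perm (Fin (k n)) :=
    fun n => FreeGroup.lift (fun i => f n (φ (FreeGroup.of i)))
  have key : ∀ g, AsEq (fun n => π n g) (fun n => f n (φ g)) := by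
    intro g
    induction g using FreeGroup.induction_on with
    | C1 => simpa using h1.symm'
    | of i => simpa [π] using AsEq.rfl'
    | inv_of i hi =>
      simp only [map_inv]
      exact hi.inv'.trans' (hinv _)
    | mul x y hx hy =>
      simp only [map_mul]
      exact (hx.mul' hy).trans' (hmul' _ _)
  refine ⟨fun n g => (permFixRatio (π n g) : ℂ), fun n => ⟨k n, hk n, π n, rfl⟩, fun g => ?_⟩
  simp only [fun n => fix_eq (hk n)]
  by_cases hg : φ g = 1
  · have h2 : Tendsto (fun n => permHamming (f n (φ g)) 1) atTop (𝓝 0) := by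
      rw [hg]; exact h1
    have h3 := ((key g).tendsto h2).const_sub 1
    have h4 := (Complex.continuous_ofReal.tendsto _).comp h3
    simpa [canonicalTrace, hg, Function.comp_def] using h4
  · have h3 := ((key g).tendsto (hfree _ hg)).const_sub 1
    have h4 := (Complex.continuous_ofReal.tendsto _).comp h3
    simpa [canonicalTrace, hg, Function.comp_def] using h4

theorem imp_sofic {Γ : Type*} [Group Γ] {G : Type*} [Group G] (φ : G →* Γ)
    (hφ : Function.Surjective φ) (ψ : ℕ → G → ℂ) (hψ : ∀ m, IsPermutationalTrace (ψ m))
    (hl : ∀ g : G, Tendsto (fun m => ψ m g) atTop (𝓝 (canonicalTrace Γ (φ g)))) :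
    IsSofic Γ := by
  choose k hk π hπ using hψ
  have hl' : ∀ g, Tendsto (fun m => permHamming (π m g) 1) atTop
      (𝓝 (1 - (canonicalTrace Γ (φ g)).re)) := by
    intro g
    have h := ((Complex.continuous_re.tendsto _).comp (hl g)).const_sub 1
    refine h.congr (fun m => ?_)
    simp [hπ, fix_eq (hk m)]
  choose s hs using hφ
  refine ⟨k, fun m x => π m (s x), hk, fun x y => ?_, fun x hx => ?_⟩
  · have h := hl' (s x * s y * (s (x * y))⁻¹)
    simp only [map_mul, map_inv, hs, mul_inv_cancel] at h
    simp only [canonicalTrace, if_true, Complex.one_re, sub_self] at h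
    refine h.congr (fun m => ?_)
    rw [← ham_right _ _ (π m (s (x * y)))]
    simp
  · have h := hl' (s x)
    simpa [hs, canonicalTrace, hx] using h

theorem exists_surj (Γ : Type*) [Group Γ] [Countable Γ] :
    ∃ φ : FreeGroup ℕ →* Γ, Function.Surjective φ := by
  obtain ⟨e, he⟩ := exists_surjective_nat Γ
  refine ⟨FreeGroup.lift e, fun x => ?_⟩
  obtain ⟨n, rfl⟩ := he x
  exact ⟨FreeGroup.of n, by simp⟩

/-- a countable group `Γ` is sofic iff (ii) there is a surjection
`φ : G → Γ` from some group `G` such that `τ_Γ ∘ φ` is a pointwise limit of permutational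
traces, iff (iii) for every surjection `φ : F_∞ → Γ`, `τ_Γ ∘ φ` is a pointwise limit of
permutational traces. -/
theorem stmt10 {Γ : Type*} [Group Γ] [Countable Γ] :
    (IsSofic Γ ↔
      ∃ (G : Type) (_ : Group G) (φ : G →* Γ), Function.Surjective φ ∧
        ∃ ψ : ℕ → G → ℂ, (∀ m, IsPermutationalTrace (ψ m)) ∧
          ∀ g : G, Tendsto (fun m => ψ m g) atTop (𝓝 (canonicalTrace Γ (φ g)))) ∧
    (IsSofic Γ ↔
      ∀ φ : FreeGroup ℕ →* Γ, Function.Surjective φ →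
        ∃ ψ : ℕ → FreeGroup ℕ → ℂ, (∀ m, IsPermutationalTrace (ψ m)) ∧
          ∀ g : FreeGroup ℕ, Tendsto (fun m => ψ m g) atTop (𝓝 (canonicalTrace Γ (φ g)))) := by
  obtain ⟨φ₀, hφ₀⟩ := exists_surj Γ
  refine ⟨⟨fun h => ⟨FreeGroup ℕ, inferInstance, φ₀, hφ₀, sofic_imp h φ₀⟩, ?_⟩,
    ⟨fun h φ _ => sofic_imp h φ, fun h => ?_⟩⟩
  · rintro ⟨G, _, φ, hφ, ψ, hψ, hl⟩
    exact imp_sofic φ hφ ψ hψ hl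
  · obtain ⟨ψ, hψ, hl⟩ := h φ₀ hφ₀
    exact imp_sofic φ₀ hφ₀ ψ hψ hl

end
end

section
/- Let A be a unital C*-algebra, a ∈ A, and s ∈ ℝ. The map τ ↦ dim_τ(ker a) is continuous on the set Λ_{a,s} = { τ trace on A : τ(ln_+|a|) ≥ s }, equipped with the topology of pointwise convergence. -/
open scoped ComplexOrder ENNReal
open Filter Topology Matrix

set_option synthInstance.maxHeartbeats 1000000
set_option maxHeartbeats 1000000

noncomputable section

/-- A (finite positive) trace on a unital C*-algebra `A`: a positive linear functional
`τ : A → ℂ` satisfying `τ (x * y) = τ (y * x)`. -/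
def IsCStarTrace {A : Type*} [CStarAlgebra A] (τ : A → ℂ) : Prop :=
  (∀ x y : A, τ (x + y) = τ x + τ y) ∧ (∀ (c : ℂ) (x : A), τ (c • x) = c * τ x) ∧
  (∀ x : A, 0 ≤ τ (star x * x)) ∧ (∀ x y : A, τ (x * y) = τ (y * x))

/-- `τ(ln₊ |x|) := inf { τ(g(|x|)) : g : [0,∞) → ℝ continuous, g ≥ ln₊ } ∈ ℝ ∪ {−∞}`. -/
def traceLnPlus {A : Type*} [CStarAlgebra A] (τ : A → ℂ) (x : A) : EReal :=
  ⨅ g ∈ lnPlusMajorants, ((τ (cfc g (cfcAbs x))).re : EReal)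

/-- `dim_τ(ker x) := inf { τ(h(|x|)) : h : [0,∞) → [0,1] continuous, h 0 = 1 }`. -/
def traceKerDim {A : Type*} [CStarAlgebra A] (τ : A → ℂ) (x : A) : ℝ :=
  sInf {r : ℝ | ∃ h : ℝ → ℝ, ContinuousOn h (Set.Ici 0) ∧
    (∀ t ∈ Set.Ici (0:ℝ), h t ∈ Set.Icc (0:ℝ) 1) ∧ h 0 = 1 ∧ r = (τ (cfc h (cfcAbs x))).re}

lemma aux_sa {A : Type*} [CStarAlgebra A] (a : A) : IsSelfAdjoint (cfcAbs a) := by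
  unfold cfcAbs
  exact cfc_predicate (R := ℝ) _ _

lemma aux_spec {A : Type*} [CStarAlgebra A] (a : A) :
    spectrum ℝ (cfcAbs a) ⊆ Set.Ici 0 := by
  unfold cfcAbs
  have h : IsSelfAdjoint (star a * a) := IsSelfAdjoint.star_mul_self a
  rw [cfc_map_spectrum Real.sqrt (star a * a)]
  rintro _ ⟨t, _, rfl⟩
  exact Real.sqrt_nonneg t

lemma aux_nonneg {A : Type*} [CStarAlgebra A] (a : A) {τ : A → ℂ} (hτ : IsCStarTrace τ)
    {f : ℝ → ℝ} (hf : ContinuousOn f (Set.Ici 0)) (h0 : ∀ t ∈ Set.Ici (0:ℝ), 0 ≤ f t) :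
    0 ≤ (τ (cfc f (cfcAbs a))).re := by
  have hf' := hf.mono (aux_spec a)
  have hs : ContinuousOn (fun t => Real.sqrt (f t)) (spectrum ℝ (cfcAbs a)) := hf'.sqrt
  have e : cfc f (cfcAbs a) = star (cfc (fun t => Real.sqrt (f t)) (cfcAbs a)) *
      cfc (fun t => Real.sqrt (f t)) (cfcAbs a) := by
    have hsa : IsSelfAdjoint (cfc (fun t => Real.sqrt (f t)) (cfcAbs a)) :=
      cfc_predicate (R := ℝ) _ _
    rw [hsa.star_eq, ← cfc_mul _ _ _ hs hs]
    apply cfc_congr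
    intro t ht
    exact (Real.mul_self_sqrt (h0 t (aux_spec a ht))).symm
  rw [e]
  exact (Complex.le_def.1 (hτ.2.2.1 _)).1

lemma aux_add {A : Type*} [CStarAlgebra A] (a : A) {τ : A → ℂ} (hτ : IsCStarTrace τ)
    {f g : ℝ → ℝ} (hf : ContinuousOn f (Set.Ici 0)) (hg : ContinuousOn g (Set.Ici 0)) (c : ℝ) :
    (τ (cfc (fun t => f t + c * g t) (cfcAbs a))).re =
      (τ (cfc f (cfcAbs a))).re + c * (τ (cfc g (cfcAbs a))).re := by
  have hf' := hf.mono (aux_spec a)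
  have hg' := hg.mono (aux_spec a)
  rw [cfc_add (cfcAbs a) f (fun t => c * g t) hf' (continuousOn_const.mul hg'),
    cfc_const_mul c g (cfcAbs a) hg', hτ.1]
  have : (c • cfc g (cfcAbs a) : A) = (c : ℂ) • cfc g (cfcAbs a) := by simp
  rw [this, hτ.2.1]
  simp

lemma aux_mono {A : Type*} [CStarAlgebra A] (a : A) {τ : A → ℂ} (hτ : IsCStarTrace τ)
    {f g : ℝ → ℝ} (hf : ContinuousOn f (Set.Ici 0)) (hg : ContinuousOn g (Set.Ici 0))
    (h : ∀ t ∈ Set.Ici (0:ℝ), f t ≤ g t) :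
    (τ (cfc f (cfcAbs a))).re ≤ (τ (cfc g (cfcAbs a))).re := by
  have h1 := aux_add a hτ hg hf (-1)
  have h2 := aux_nonneg a hτ (f := fun t => g t + (-1) * f t)
    (hg.add (continuousOn_const.mul hf)) (fun t ht => by have := h t ht; linarith)
  linarith

/-- cut-off function -/
def auxK (m t : ℝ) : ℝ := max 0 (1 - t * Real.exp m)

lemma auxK_cont (m : ℝ) : Continuous (auxK m) := by unfold auxK; fun_prop

/-- positive part of the logarithm -/
def auxL (t : ℝ) : ℝ := Real.log (max t 1)

lemma auxL_cont : Continuous auxL := by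
  unfold auxL
  refine Continuous.log (by fun_prop) (fun t => ?_)
  have := le_max_right t 1
  linarith

lemma auxK_mem (m : ℝ) : ∀ t ∈ Set.Ici (0:ℝ), auxK m t ∈ Set.Icc (0:ℝ) 1 := by
  intro t ht
  have : 0 ≤ t * Real.exp m := mul_nonneg ht (Real.exp_pos m).le
  exact ⟨le_max_left _ _, max_le zero_le_one (by linarith)⟩

lemma aux_upper {A : Type*} [CStarAlgebra A] (a : A) {τ : A → ℂ} (hτ : IsCStarTrace τ) (m : ℝ) :
    traceKerDim τ a ≤ (τ (cfc (auxK m) (cfcAbs a))).re := by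
  apply csInf_le
  · refine ⟨0, ?_⟩
    rintro r ⟨h, hc, hm, -, rfl⟩
    exact aux_nonneg a hτ hc (fun t ht => (hm t ht).1)
  · exact ⟨auxK m, (auxK_cont m).continuousOn, auxK_mem m, by simp [auxK], rfl⟩

lemma aux_lower {A : Type*} [CStarAlgebra A] (a : A) {τ : A → ℂ} (hτ : IsCStarTrace τ) (s : ℝ)
    (hs : (s : EReal) ≤ traceLnPlus τ a) {m : ℝ} (hm : 0 < m) :
    (τ (cfc (auxK m) (cfcAbs a))).re - ((τ (cfc auxL (cfcAbs a))).re - s) / m ≤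
      traceKerDim τ a := by
  apply le_csInf
  · exact ⟨_, auxK m, (auxK_cont m).continuousOn, auxK_mem m, by simp [auxK], rfl⟩
  rintro r ⟨h, hc, hh, h0, rfl⟩
  set p : ℝ → ℝ := fun t => max 0 (auxK m t - h t) with hp
  have hpc : ContinuousOn p (Set.Ici 0) :=
    continuousOn_const.sup ((auxK_cont m).continuousOn.sub hc)
  have hLc : ContinuousOn auxL (Set.Ici 0) := auxL_cont.continuousOn
  have hg : (fun t => auxL t + (-m) * p t) ∈ lnPlusMajorants := by
    refine ⟨hLc.add (continuousOn_const.mul hpc), fun t ht => ?_⟩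
    have hL0 : 0 ≤ auxL t := Real.log_nonneg (le_max_right _ _)
    have hk := auxK_mem m t ht
    have hht := hh t ht
    rcases (Set.mem_Ici.1 ht).eq_or_lt with rfl | hpos
    · simp [hp, h0, auxK, auxL]
    by_cases hlt : t < Real.exp (-m)
    · have h1 : Real.log t ≤ -m := by
        rw [Real.log_le_iff_le_exp hpos]; exact hlt.le
      have h2 : p t ≤ 1 := max_le zero_le_one (by linarith [hk.2, hht.1])
      nlinarith
    · have h1 : auxK m t = 0 := by
        apply max_eq_left
        have : Real.exp (-m) * Real.exp m ≤ t * Real.exp m :=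
          mul_le_mul_of_nonneg_right (not_lt.1 hlt) (Real.exp_pos m).le
        rw [← Real.exp_add] at this
        simp at this
        linarith
      have h2 : p t = 0 := max_eq_left (by linarith [hht.1])
      have h3 : Real.log t ≤ auxL t := Real.log_le_log hpos (le_max_left _ _)
      simp only [h2]; linarith
  have h1 : (s : EReal) ≤ ((τ (cfc (fun t => auxL t + (-m) * p t) (cfcAbs a))).re : EReal) :=
    hs.trans (iInf₂_le _ hg)
  rw [EReal.coe_le_coe_iff, aux_add a hτ hLc hpc] at h1
  have h2 := aux_mono a hτ (f := auxK m) (g := fun t => h t + 1 * p t)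
    (auxK_cont m).continuousOn (hc.add (continuousOn_const.mul hpc))
    (fun t _ => by have := le_max_right 0 (auxK m t - h t); simp only [hp]; linarith)
  rw [aux_add a hτ hc hpc] at h2
  have h3 : (τ (cfc p (cfcAbs a))).re ≤ ((τ (cfc auxL (cfcAbs a))).re - s) / m := by
    rw [le_div_iff₀ hm]; linarith
  linarith

/-- the map `τ ↦ dim_τ(ker a)` is continuous on
`Λ_{a,s} = {τ : τ(ln₊|a|) ≥ s}`, for the topology of pointwise convergence on traces. -/
theorem stmt12 {A : Type*} [CStarAlgebra A] (a : A) (s : ℝ) :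
    ContinuousOn (fun τ : A → ℂ => traceKerDim τ a)
      {τ | IsCStarTrace τ ∧ (s : EReal) ≤ traceLnPlus τ a} := by
  intro τ₀ _
  have hev : ∀ x : A, ContinuousAt (fun τ : A → ℂ => (τ x).re) τ₀ := fun x =>
    (Complex.continuous_re.comp (continuous_apply x)).continuousAt
  rw [Metric.continuousWithinAt_iff']
  rintro δ hδ
  set C : ℝ := |(τ₀ (cfc auxL (cfcAbs a))).re - s| + 1 with hC
  have hCpos : 0 < C := by positivity
  set m : ℝ := 3 * C / δ with hm
  have hmpos : 0 < m := by positivity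
  have hCm : C / m = δ / 3 := by rw [hm]; field_simp
  have e1 := Metric.continuousAt_iff'.1 (hev (cfc auxL (cfcAbs a))) 1 one_pos
  have e2 := Metric.continuousAt_iff'.1 (hev (cfc (auxK m) (cfcAbs a))) (δ / 3) (by positivity)
  have key : ∀ τ : A → ℂ, IsCStarTrace τ ∧ (s : EReal) ≤ traceLnPlus τ a →
      dist (τ (cfc auxL (cfcAbs a))).re (τ₀ (cfc auxL (cfcAbs a))).re < 1 →
      traceKerDim τ a ≤ (τ (cfc (auxK m) (cfcAbs a))).re ∧
      (τ (cfc (auxK m) (cfcAbs a))).re - δ / 3 ≤ traceKerDim τ a := by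
    rintro τ ⟨h1, h2⟩ h3
    refine ⟨aux_upper a h1 m, le_trans ?_ (aux_lower a h1 s h2 hmpos)⟩
    rw [← hCm]
    have : (τ (cfc auxL (cfcAbs a))).re - s ≤ C := by
      rw [Real.dist_eq] at h3
      have := (abs_lt.1 h3).2
      have := le_abs_self ((τ₀ (cfc auxL (cfcAbs a))).re - s)
      linarith
    have := div_le_div_of_nonneg_right this hmpos.le
    linarith
  have k0 := key τ₀ ‹_› (by simp)
  filter_upwards [nhdsWithin_le_nhds e1, nhdsWithin_le_nhds e2, self_mem_nhdsWithin]
    with τ h1 h2 h3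
  have k1 := key τ h3 h1
  rw [Real.dist_eq] at h2 ⊢
  rw [abs_lt] at h2 ⊢
  constructor <;> linarith [k0.1, k0.2, k1.1, k1.2, h2.1, h2.2]

end
end

section
/- Let A be a unital C*-algebra and a, b, c ∈ A with a and c invertible. Then for every trace τ on A, τ(ln_+|abc|) ≤ ln(‖a‖·‖c‖)·rk_τ(b) + τ(ln_+|b|), where rk_τ(b) := τ(1) − dim_τ(ker b). -/
open scoped ComplexOrder ENNReal
open Filter Topology Matrix

set_option synthInstance.maxHeartbeats 1000000
set_option maxHeartbeats 1000000

noncomputable section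

/-- `rk_τ(b) := τ(1) - dim_τ(ker b)`, the von Neumann rank of `b`. -/
def traceRank {A : Type*} [CStarAlgebra A] (τ : A → ℂ) (b : A) : ℝ :=
  (τ 1).re - traceKerDim τ b

section Helpers

variable {A : Type*} [CStarAlgebra A]

lemma tr_add {τ : A → ℂ} (hτ : IsCStarTrace τ) (x y : A) :
    (τ (x + y)).re = (τ x).re + (τ y).re := by
  rw [hτ.1, Complex.add_re]

lemma tr_smul {τ : A → ℂ} (hτ : IsCStarTrace τ) (r : ℝ) (x : A) :
    (τ (r • x)).re = r * (τ x).re := by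
  have := hτ.2.1 (r : ℂ) x
  rw [Complex.coe_smul] at this
  rw [this]; simp

lemma tr_algebraMap {τ : A → ℂ} (hτ : IsCStarTrace τ) (r : ℝ) :
    (τ (algebraMap ℝ A r)).re = r * (τ 1).re := by
  rw [Algebra.algebraMap_eq_smul_one, tr_smul hτ]

variable [PartialOrder A] [StarOrderedRing A]

lemma tr_nonneg {τ : A → ℂ} (hτ : IsCStarTrace τ) {y : A} (hy : 0 ≤ y) : 0 ≤ (τ y).re := by
  obtain ⟨s, rfl⟩ := CStarAlgebra.nonneg_iff_eq_star_mul_self.1 hy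
  exact (Complex.le_def.1 (hτ.2.2.1 s)).1

lemma tr_mono {τ : A → ℂ} (hτ : IsCStarTrace τ) {x y : A} (hy : x ≤ y) :
    (τ x).re ≤ (τ y).re := by
  have h1 := tr_nonneg hτ (sub_nonneg.2 hy)
  have h2 := tr_add hτ x (y - x)
  rw [add_sub_cancel] at h2
  linarith

lemma spec_sub {y : A} (hy : 0 ≤ y) : spectrum ℝ y ⊆ Set.Ici 0 :=
  fun _ h => spectrum_nonneg_of_nonneg hy h

lemma tr_cfc_mono {τ : A → ℂ} (hτ : IsCStarTrace τ) {y : A} (hy : 0 ≤ y) {f g : ℝ → ℝ}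
    (hf : ContinuousOn f (Set.Ici 0)) (hg : ContinuousOn g (Set.Ici 0))
    (h : ∀ t ∈ Set.Ici (0:ℝ), f t ≤ g t) :
    (τ (cfc f y)).re ≤ (τ (cfc g y)).re :=
  tr_mono hτ (cfc_mono (fun x hx => h x (spec_sub hy hx)) (hf.mono (spec_sub hy))
    (hg.mono (spec_sub hy)))

lemma tr_poly {τ : A → ℂ} (hτ : IsCStarTrace τ) (x y : A) (p : Polynomial ℝ) :
    (τ (Polynomial.aeval (x * y) p)).re = (τ (Polynomial.aeval (y * x) p)).re := by
  induction p using Polynomial.induction_on' with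
  | add p q hp hq => simp only [map_add, tr_add hτ, hp, hq]
  | monomial n r =>
    simp only [Polynomial.aeval_monomial, ← Algebra.smul_def, tr_smul hτ]
    congr 2
    cases n with
    | zero => simp
    | succ n =>
      rw [pow_succ, ← mul_assoc, mul_pow_mul, hτ.2.2.2, ← mul_assoc, ← pow_succ']

lemma tr_cfc_near {τ : A → ℂ} (hτ : IsCStarTrace τ) {y : A} (hy : 0 ≤ y) {f g : ℝ → ℝ}
    (hf : ContinuousOn f (Set.Ici 0)) (hg : ContinuousOn g (Set.Ici 0)) (δ : ℝ)
    (h : ∀ t ∈ Set.Icc (0:ℝ) ‖y‖, f t ≤ δ + g t) :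
    (τ (cfc f y)).re ≤ δ * (τ 1).re + (τ (cfc g y)).re := by
  have hs : spectrum ℝ y ⊆ Set.Icc 0 ‖y‖ := fun t ht =>
    ⟨spec_sub hy ht, by
      rcases subsingleton_or_nontrivial A with hA | hA
      · simp at ht
      have := spectrum.norm_le_norm_of_mem ht
      exact (le_abs_self t).trans this⟩
  have hg' := hg.mono (spec_sub hy)
  have := tr_mono hτ (cfc_mono (a := y) (f := f) (g := fun t => δ + g t)
    (fun x hx => h x (hs hx)) (hf.mono (spec_sub hy)) (continuousOn_const.add hg'))
  rwa [cfc_const_add δ g y hg', tr_add hτ, tr_algebraMap hτ] at this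

lemma tr_cfc_comm_le {τ : A → ℂ} (hτ : IsCStarTrace τ) (x : A) {f : ℝ → ℝ}
    (hf : ContinuousOn f (Set.Ici 0)) :
    (τ (cfc f (star x * x))).re ≤ (τ (cfc f (x * star x))).re := by
  have h1 : (0:ℝ) ≤ (τ 1).re := tr_nonneg hτ zero_le_one
  have hn1 : ‖star x * x‖ = ‖x‖ * ‖x‖ := CStarRing.norm_star_mul_self
  have hn2 : ‖x * star x‖ = ‖x‖ * ‖x‖ := CStarRing.norm_self_mul_star
  refine le_of_forall_pos_le_add fun ε hε => ?_
  set δ := ε / (2 * ((τ 1).re + 1)) with hδ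
  have hδ0 : 0 < δ := by positivity
  obtain ⟨p, hp⟩ := exists_polynomial_near_of_continuousOn 0 (‖x‖ * ‖x‖) f
    (hf.mono Set.Icc_subset_Ici_self) δ hδ0
  have a1 := tr_cfc_near hτ (star_mul_self_nonneg x) hf (p.continuous.continuousOn) δ
    (fun t ht => by have := abs_lt.1 (hp t (hn1 ▸ ht)); linarith)
  have a2 := tr_cfc_near hτ (mul_star_self_nonneg x) (p.continuous.continuousOn) hf δ
    (fun t ht => by have := abs_lt.1 (hp t (hn2 ▸ ht)); linarith)
  rw [cfc_polynomial p _ (IsSelfAdjoint.star_mul_self x)] at a1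
  rw [cfc_polynomial p _ (IsSelfAdjoint.mul_star_self x)] at a2
  have a3 := tr_poly hτ (star x) x p
  have a4 : δ * (τ 1).re * 2 ≤ ε := by
    rw [hδ, div_mul_eq_mul_div, div_mul_eq_mul_div, div_le_iff₀ (by positivity)]
    nlinarith
  linarith

lemma tr_opmono {τ : A → ℂ} (hτ : IsCStarTrace τ) (a b c : A) {f : ℝ → ℝ}
    (hf : ContinuousOn f (Set.Ici 0))
    (hm : ∀ u v : A, 0 ≤ u → u ≤ v → cfc f u ≤ cfc f v) :
    (τ (cfc f (star (a * b * c) * (a * b * c)))).re ≤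
      (τ (cfc f ((‖a‖ * ‖c‖) ^ 2 • (star b * b)))).re := by
  have e1 : star (a * b * c) * (a * b * c) ≤ star (‖a‖ • (b * c)) * (‖a‖ • (b * c)) := by
    have := CStarAlgebra.star_left_conjugate_le_norm_smul (a := b * c) (b := star a * a)
      (IsSelfAdjoint.star_mul_self a)
    rw [CStarRing.norm_star_mul_self] at this
    simpa [mul_assoc, smul_smul] using this
  have e2 : (‖a‖ • (b * c)) * star (‖a‖ • (b * c)) ≤
      star ((‖a‖ * ‖c‖) • star b) * ((‖a‖ * ‖c‖) • star b) := by
    have := CStarAlgebra.star_right_conjugate_le_norm_smul (a := b) (b := c * star c)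
      (IsSelfAdjoint.mul_star_self c)
    rw [CStarRing.norm_self_mul_star] at this
    have := smul_le_smul_of_nonneg_left this (mul_self_nonneg ‖a‖)
    convert this using 1
    · simp [mul_assoc, smul_smul]
    · simp [smul_smul]; congr 1; ring
  calc _ ≤ _ := tr_mono hτ (hm _ _ (star_mul_self_nonneg _) e1)
    _ ≤ _ := tr_cfc_comm_le hτ _ hf
    _ ≤ _ := tr_mono hτ (hm _ _ (mul_star_self_nonneg _) e2)
    _ ≤ _ := tr_cfc_comm_le hτ _ hf
    _ = _ := by simp [smul_smul, pow_two]

lemma cfc_abs_eq (x : A) {g : ℝ → ℝ} (hg : ContinuousOn g (Set.Ici 0)) :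
    cfc g (cfcAbs x) = cfc (fun t => g (√t)) (star x * x) := by
  unfold cfcAbs
  rw [cfc_comp' g Real.sqrt (star x * x)
    (hg.mono (by rintro _ ⟨t, _, rfl⟩; exact Real.sqrt_nonneg t))
    Real.continuous_sqrt.continuousOn (IsSelfAdjoint.star_mul_self x)]

lemma cfcAbs_nonneg (x : A) : 0 ≤ cfcAbs x := cfc_nonneg fun t _ => Real.sqrt_nonneg t

lemma shift_pos {ε : ℝ} (hε : 0 < ε) {u : A} (hu : 0 ≤ u) :
    IsStrictlyPositive (algebraMap ℝ A ε + u) :=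
  IsStrictlyPositive.add_nonneg
    ⟨algebraMap_nonneg _ hε.le, (IsUnit.mk0 ε hε.ne').map (algebraMap ℝ A)⟩ hu

lemma shift_eq (ε : ℝ) {u : A} (hu : 0 ≤ u) :
    cfc (fun t : ℝ => ε + t) u = algebraMap ℝ A ε + u := by
  rw [cfc_const_add ε (fun t => t) u, cfc_id' ℝ u]

lemma log_opmono {ε : ℝ} (hε : 0 < ε) (u v : A) (hu : 0 ≤ u) (huv : u ≤ v) :
    cfc (fun t : ℝ => Real.log (ε + t)) u ≤ cfc (fun t : ℝ => Real.log (ε + t)) v := by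
  have key : ∀ w : A, 0 ≤ w →
      cfc (fun t : ℝ => Real.log (ε + t)) w = CFC.log (algebraMap ℝ A ε + w) := by
    intro w hw
    have hlog : ContinuousOn Real.log ((fun t => ε + t) '' spectrum ℝ w) := by
      apply Real.continuousOn_log.mono
      rintro _ ⟨t, ht, rfl⟩
      have : 0 ≤ t := spec_sub hw ht
      simp only [Set.mem_compl_iff, Set.mem_singleton_iff]
      positivity
    rw [cfc_comp' Real.log (fun t => ε + t) w hlog, shift_eq ε hw]; rfl
  rw [key u hu, key v (hu.trans huv)]
  exact CFC.log_le_log (by gcongr) (shift_pos hε hu)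

lemma inv_opmono {ε : ℝ} (hε : 0 < ε) (u v : A) (hu : 0 ≤ u) (huv : u ≤ v) :
    cfc (fun t : ℝ => -(ε + t)⁻¹) u ≤ cfc (fun t : ℝ => -(ε + t)⁻¹) v := by
  have key : ∀ w : A, 0 ≤ w →
      cfc (fun t : ℝ => -(ε + t)⁻¹) w = - Ring.inverse (algebraMap ℝ A ε + w) := by
    intro w hw
    rw [cfc_neg, cfc_inv (fun t : ℝ => ε + t) w, shift_eq ε hw]
    intro t ht
    have : 0 ≤ t := spec_sub hw ht
    positivity
  rw [key u hu, key v (hu.trans huv)]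
  exact neg_le_neg (CStarAlgebra.antitoneOn_ringInverse (shift_pos hε hu)
    (shift_pos hε (hu.trans huv)) (by gcongr))

lemma tr_abs_opmono {τ : A → ℂ} (hτ : IsCStarTrace τ) (a b c : A) {f : ℝ → ℝ}
    (hf : ContinuousOn f (Set.Ici 0))
    (hm : ∀ u v : A, 0 ≤ u → u ≤ v → cfc f u ≤ cfc f v) :
    (τ (cfc (fun t => f (t ^ 2)) (cfcAbs (a * b * c)))).re ≤
      (τ (cfc (fun t => f ((‖a‖ * ‖c‖) ^ 2 * t ^ 2)) (cfcAbs b))).re := by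
  have hc1 : ContinuousOn (fun t : ℝ => f (t ^ 2)) (Set.Ici 0) :=
    hf.comp (by fun_prop) (fun t _ => sq_nonneg t)
  have hc2 : ContinuousOn (fun t : ℝ => f ((‖a‖ * ‖c‖) ^ 2 * t ^ 2)) (Set.Ici 0) :=
    hf.comp (by fun_prop) (fun t _ => by simp only [Set.mem_Ici]; positivity)
  rw [cfc_abs_eq _ hc1, cfc_abs_eq _ hc2]
  have h1 : cfc (fun t : ℝ => f (√t ^ 2)) (star (a * b * c) * (a * b * c)) =
      cfc f (star (a * b * c) * (a * b * c)) :=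
    cfc_congr fun t ht => by
      simp only [Real.sq_sqrt (spec_sub (star_mul_self_nonneg _) ht)]
  have h2 : cfc (fun t : ℝ => f ((‖a‖ * ‖c‖) ^ 2 * √t ^ 2)) (star b * b) =
      cfc f ((‖a‖ * ‖c‖) ^ 2 • (star b * b)) := by
    have hc3 : ContinuousOn f ((fun t => (‖a‖ * ‖c‖) ^ 2 * t) '' spectrum ℝ (star b * b)) := by
      apply hf.mono
      rintro _ ⟨t, ht, rfl⟩
      have ht0 : 0 ≤ t := spec_sub (star_mul_self_nonneg b) ht
      simp only [Set.mem_Ici]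
      positivity
    rw [← cfc_comp_const_mul _ f _ hc3 (IsSelfAdjoint.star_mul_self b)]
    exact cfc_congr fun t ht => by
        simp only [Real.sq_sqrt (spec_sub (star_mul_self_nonneg _) ht)]
  rw [h1, h2]
  exact tr_opmono hτ a b c hf hm

lemma ker_le {τ : A → ℂ} (hτ : IsCStarTrace τ) (x : A) {h : ℝ → ℝ}
    (hc : ContinuousOn h (Set.Ici 0)) (h01 : ∀ t ∈ Set.Ici (0:ℝ), h t ∈ Set.Icc (0:ℝ) 1)
    (h0 : h 0 = 1) : traceKerDim τ x ≤ (τ (cfc h (cfcAbs x))).re := by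
  refine csInf_le ?_ ⟨h, hc, h01, h0, rfl⟩
  refine ⟨0, ?_⟩
  rintro _ ⟨h, hc, h01, h0, rfl⟩
  exact tr_nonneg hτ (cfc_nonneg fun t ht => (h01 t (spec_sub (cfcAbs_nonneg x) ht)).1)

lemma le_ker {τ : A → ℂ} (x : A) (r : ℝ)
    (H : ∀ h : ℝ → ℝ, ContinuousOn h (Set.Ici 0) → (∀ t ∈ Set.Ici (0:ℝ), h t ∈ Set.Icc (0:ℝ) 1) →
      h 0 = 1 → r ≤ (τ (cfc h (cfcAbs x))).re) : r ≤ traceKerDim τ x := by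
  apply le_csInf
  · exact ⟨_, fun _ => 1, continuousOn_const, fun _ _ => by simp, rfl, rfl⟩
  · rintro _ ⟨h, hc, h01, h0, rfl⟩
    exact H h hc h01 h0

lemma near_zero {g : ℝ → ℝ} (hg : ContinuousOn g (Set.Ici 0)) {m : ℝ} (hm : m < g 0) :
    ∃ r > 0, ∀ t, 0 ≤ t → t < r → m < g t := by
  have h1 := (hg 0 (by simp)).eventually (lt_mem_nhds hm)
  rw [eventually_nhdsWithin_iff, Metric.eventually_nhds_iff] at h1
  obtain ⟨r, hr, h⟩ := h1
  exact ⟨r, hr, fun t h0 ht => h (by simpa [abs_of_nonneg h0] using ht) h0⟩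

lemma ker_mono [Nontrivial A] {τ : A → ℂ} (hτ : IsCStarTrace τ) (a b c : A) (ha : IsUnit a)
    (hc : IsUnit c) : traceKerDim τ (a * b * c) ≤ traceKerDim τ b := by
  lift a to Aˣ using ha
  lift c to Aˣ using hc
  set x : A := a * b * c with hx
  have hb : b = (↑a⁻¹ : A) * x * (↑c⁻¹ : A) := by simp [hx, mul_assoc]
  set K : ℝ := (‖(↑a⁻¹ : A)‖ * ‖(↑c⁻¹ : A)‖) ^ 2 with hK
  have hK0 : 0 < K := by
    have h1 : 0 < ‖(↑a⁻¹ : A)‖ := norm_pos_iff.2 a⁻¹.isUnit.ne_zero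
    have h2 : 0 < ‖(↑c⁻¹ : A)‖ := norm_pos_iff.2 c⁻¹.isUnit.ne_zero
    positivity
  have h1 : (0:ℝ) ≤ (τ 1).re := tr_nonneg hτ zero_le_one
  have cinv : ∀ e : ℝ, 0 < e → ContinuousOn (fun t : ℝ => -(e + t)⁻¹) (Set.Ici 0) := by
    intro e he
    refine (ContinuousOn.inv₀ (by fun_prop) ?_).neg
    intro t (ht : 0 ≤ t)
    positivity
  refine le_ker b _ fun h hcont h01 h0 => ?_
  refine le_of_forall_pos_le_add fun ε hε => ?_
  set δ := ε / ((τ 1).re + 1) with hδ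
  have hδ0 : 0 < δ := by positivity
  obtain ⟨r, hr, hrh⟩ := near_zero hcont (m := 1 - δ) (by rw [h0]; linarith)
  set e := δ * r ^ 2 with he
  have he0 : 0 < e := by positivity
  -- the two resolvent functions
  have c1 : ContinuousOn (fun t : ℝ => -(e + t ^ 2)⁻¹) (Set.Ici 0) :=
    (cinv e he0).comp (by fun_prop) (fun t _ => sq_nonneg t)
  have c2 : ContinuousOn (fun t : ℝ => -(e + K * t ^ 2)⁻¹) (Set.Ici 0) :=
    (cinv e he0).comp (by fun_prop) (fun t _ => by simp only [Set.mem_Ici]; positivity)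
  have k1 := tr_abs_opmono hτ (↑a⁻¹ : A) x (↑c⁻¹ : A) (cinv e he0) (inv_opmono he0)
  rw [← hb, ← hK] at k1
  have k2 : traceKerDim τ x ≤ (τ (cfc (fun t : ℝ => (-e) * (-(e + K * t ^ 2)⁻¹)) (cfcAbs x))).re := by
    apply ker_le hτ x (h := fun t : ℝ => (-e) * (-(e + K * t ^ 2)⁻¹)) (continuousOn_const.mul c2)
    · intro t ht
      have : 0 < e + K * t ^ 2 := by positivity
      simp only [neg_mul_neg, ← div_eq_mul_inv]
      refine ⟨by positivity, ?_⟩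
      rw [div_le_one this]
      have : 0 ≤ K * t ^ 2 := by positivity
      linarith
    · simp [he0.ne']
  rw [cfc_const_mul _ _ _ (c2.mono (spec_sub (cfcAbs_nonneg x))), tr_smul hτ] at k2
  have k3 := tr_cfc_near hτ (cfcAbs_nonneg b) (continuousOn_const.mul c1) hcont δ
    (f := fun t : ℝ => (-e) * (-(e + t ^ 2)⁻¹)) (by
      intro t ht
      have ht0 : 0 ≤ t := ht.1
      have hp : 0 < e + t ^ 2 := by positivity
      rw [neg_mul_neg, ← div_eq_mul_inv, div_le_iff₀ hp]
      rcases lt_or_ge t r with hlt | hge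
      · have := hrh t ht0 hlt
        nlinarith [sq_nonneg t]
      · have h2 := (h01 t ht0).1
        have h3 : r ^ 2 ≤ t ^ 2 := by gcongr
        have h4 : 0 ≤ h t * (e + t ^ 2) := by positivity
        have h5 : δ * r ^ 2 ≤ δ * t ^ 2 := by gcongr
        nlinarith)
  rw [cfc_const_mul _ _ _ (c1.mono (spec_sub (cfcAbs_nonneg b))), tr_smul hτ] at k3
  have a4 : δ * (τ 1).re ≤ ε := by
    rw [hδ, div_mul_eq_mul_div, div_le_iff₀ (by positivity)]
    nlinarith
  nlinarith

lemma cont_logsq {η : ℝ} (hη : 0 < η) :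
    ContinuousOn (fun t : ℝ => Real.log (η + t ^ 2)) (Set.Ici 0) := by
  refine ContinuousOn.log (by fun_prop) ?_
  intro t _
  positivity

/-- upper bound -/
lemma lnPlus_le {τ : A → ℂ} (hτ : IsCStarTrace τ) (x : A) {ε : ℝ} (hε : 0 < ε) (hε1 : ε < 1) :
    traceLnPlus τ x ≤ ((1 / 2 * (τ (cfc (fun t : ℝ => Real.log (ε + t ^ 2)) (cfcAbs x))).re
      + -(1 / 2) * Real.log ε * traceKerDim τ x : ℝ) : EReal) := by
  have hL : 0 < -(1 / 2) * Real.log ε := by have := Real.log_neg hε hε1; linarith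
  set L := -(1 / 2) * Real.log ε with hLdef
  set I := (τ (cfc (fun t : ℝ => Real.log (ε + t ^ 2)) (cfcAbs x))).re with hI
  -- every h gives a majorant
  have key : ∀ h : ℝ → ℝ, ContinuousOn h (Set.Ici 0) →
      (∀ t ∈ Set.Ici (0:ℝ), h t ∈ Set.Icc (0:ℝ) 1) → h 0 = 1 →
      traceLnPlus τ x ≤ ((1 / 2 * I + L * (τ (cfc h (cfcAbs x))).re : ℝ) : EReal) := by
    intro h hc h01 h0
    have c1 : ContinuousOn (fun t : ℝ => 1 / 2 * Real.log (ε + t ^ 2)) (Set.Ici 0) :=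
      continuousOn_const.mul (cont_logsq hε)
    have c2 : ContinuousOn (fun t : ℝ => L * h t) (Set.Ici 0) := continuousOn_const.mul hc
    have hmem : (fun t : ℝ => 1 / 2 * Real.log (ε + t ^ 2) + L * h t) ∈ lnPlusMajorants := by
      refine ⟨c1.add c2, ?_⟩
      intro t (ht : 0 ≤ t)
      rcases ht.eq_or_lt with rfl | ht'
      · simp [h0, hLdef]
      · have h1 : Real.log (t ^ 2) ≤ Real.log (ε + t ^ 2) :=
          Real.log_le_log (by positivity) (by linarith)
        rw [Real.log_pow] at h1
        have h2 : 0 ≤ L * h t := mul_nonneg hL.le (h01 t ht).1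
        push_cast at h1
        simp only
        linarith
    refine (iInf₂_le _ hmem).trans (le_of_eq ?_)
    have hs := spec_sub (cfcAbs_nonneg x)
    rw [cfc_add _ _ _ (c1.mono hs) (c2.mono hs), tr_add hτ,
      cfc_const_mul _ _ _ ((cont_logsq hε).mono hs), cfc_const_mul _ _ _ (hc.mono hs),
      tr_smul hτ, tr_smul hτ]
  -- pass to infimum
  induction hT : traceLnPlus τ x with
  | bot => exact bot_le
  | top =>
    have := key (fun _ => 1) continuousOn_const (fun _ _ => by simp) rfl
    rw [hT] at this
    exact absurd this (not_le.2 (EReal.coe_lt_top _))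
  | coe r =>
    rw [EReal.coe_le_coe_iff]
    have : (r - 1 / 2 * I) / L ≤ traceKerDim τ x := by
      refine le_ker x _ fun h hc h01 h0 => ?_
      have := key h hc h01 h0
      rw [hT, EReal.coe_le_coe_iff] at this
      rw [div_le_iff₀ hL]
      linarith
    rw [div_le_iff₀ hL] at this
    linarith

/-- lower bound -/
lemma le_lnPlus {τ : A → ℂ} (hτ : IsCStarTrace τ) (x : A) {g : ℝ → ℝ} (hg : g ∈ lnPlusMajorants)
    {δ : ℝ} (hδ : 0 < δ) {M : ℝ} (hM : 0 < M) : ∃ η, 0 < η ∧ η < M ∧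
      1 / 2 * (τ (cfc (fun t : ℝ => Real.log (η + t ^ 2)) (cfcAbs x))).re
      + -(1 / 2) * Real.log η * traceKerDim τ x ≤ δ * (τ 1).re + (τ (cfc g (cfcAbs x))).re := by
  obtain ⟨hgc, hgl⟩ := hg
  have hg0 : 0 ≤ g 0 := by simpa using hgl 0 (by simp)
  obtain ⟨r', hr', hr'g⟩ := near_zero hgc (m := -δ) (by linarith)
  set r := min r' (1 / 2) with hrdef
  have hr : 0 < r := by positivity
  set η := min (min (M / 2) (1 / 2)) (2 * r ^ 2 * δ) with hη
  have hη0 : 0 < η := by positivity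
  have hηM : η < M := lt_of_le_of_lt ((min_le_left _ _).trans (min_le_left _ _)) (by linarith)
  have hη1 : η ≤ 1 / 2 := (min_le_left _ _).trans (min_le_right _ _)
  have hη2 : η ≤ 2 * r ^ 2 * δ := min_le_right _ _
  have hL : 0 < -(1 / 2) * Real.log η := by
    have := Real.log_neg hη0 (by linarith); linarith
  set L := -(1 / 2) * Real.log η with hLdef
  refine ⟨η, hη0, hηM, ?_⟩
  have hq : ∀ t, 0 ≤ t → 1 / 2 * Real.log (η + t ^ 2) ≤ δ + g t := by
    intro t ht
    rcases lt_or_ge t r with hlt | hge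
    · have h1 := hr'g t ht (hlt.trans_le (min_le_left _ _))
      have h2 : Real.log (η + t ^ 2) ≤ 0 := by
        apply Real.log_nonpos (by positivity)
        have : t < 1 / 2 := hlt.trans_le (min_le_right _ _)
        nlinarith
      linarith
    · have ht0 : 0 < t := hr.trans_le hge
      have h1 := hgl t ht
      have h2 : Real.log (η + t ^ 2) = Real.log (t ^ 2) + Real.log (1 + η / t ^ 2) := by
        rw [← Real.log_mul (by positivity) (by positivity)]
        congr 1; field_simp; ring
      have h3 : Real.log (1 + η / t ^ 2) ≤ η / t ^ 2 := by
        have := Real.log_le_sub_one_of_pos (x := 1 + η / t ^ 2) (by positivity)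
        linarith
      have h4 : η / t ^ 2 ≤ 2 * δ := by
        rw [div_le_iff₀ (by positivity)]
        have : r ^ 2 ≤ t ^ 2 := by gcongr
        nlinarith
      rw [Real.log_pow] at h2
      push_cast at h2
      linarith
  set q : ℝ → ℝ := fun t => (δ + g t - 1 / 2 * Real.log (η + t ^ 2)) / L with hqdef
  have c1 : ContinuousOn (fun t : ℝ => 1 / 2 * Real.log (η + t ^ 2)) (Set.Ici 0) :=
    continuousOn_const.mul (cont_logsq hη0)
  have qc : ContinuousOn q (Set.Ici 0) :=
    ((continuousOn_const.add hgc).sub c1).div_const L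
  have hc : ContinuousOn (fun t => min 1 (q t)) (Set.Ici 0) := ContinuousOn.inf continuousOn_const qc
  have hk := ker_le hτ x hc (fun t ht => ⟨le_min zero_le_one
      (div_nonneg (by have := hq t ht; linarith) hL.le), min_le_left _ _⟩) (by
    apply min_eq_left
    rw [hqdef]
    simp only
    rw [le_div_iff₀ hL]
    simp only [ne_eq, OfNat.ofNat_ne_zero, not_false_eq_true, zero_pow, add_zero]
    linarith)
  have c2 : ContinuousOn (fun t : ℝ => L * min 1 (q t)) (Set.Ici 0) := continuousOn_const.mul hc
  have hs := spec_sub (cfcAbs_nonneg x)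
  have k := tr_cfc_near hτ (cfcAbs_nonneg x) (c1.add c2) hgc δ (fun t ht => by
    have h1 : min 1 (q t) ≤ q t := min_le_right _ _
    have h2 := mul_le_mul_of_nonneg_left h1 hL.le
    have h3 : L * q t = δ + g t - 1 / 2 * Real.log (η + t ^ 2) := mul_div_cancel₀ _ hL.ne'
    simp only [Pi.add_apply]
    linarith)
  have e : cfc ((fun t : ℝ => 1 / 2 * Real.log (η + t ^ 2)) + fun t => L * min 1 (q t)) (cfcAbs x)
      = _ := cfc_add _ _ _ (c1.mono hs) (c2.mono hs)
  rw [e, tr_add hτ,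
      cfc_const_mul _ _ _ ((cont_logsq hη0).mono hs), cfc_const_mul _ _ _ (hc.mono hs),
      tr_smul hτ, tr_smul hτ] at k
  have := mul_le_mul_of_nonneg_left hk hL.le
  rw [← hLdef]
  linarith

lemma main_aux [Nontrivial A] {τ : A → ℂ} (hτ : IsCStarTrace τ) (a b c : A) (ha : IsUnit a)
    (hc : IsUnit c) {g : ℝ → ℝ} (hg : g ∈ lnPlusMajorants) {δ : ℝ} (hδ : 0 < δ) :
    traceLnPlus τ (a * b * c) ≤ ((Real.log (‖a‖ * ‖c‖) * traceRank τ b +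
      (δ * (τ 1).re + (τ (cfc g (cfcAbs b))).re) : ℝ) : EReal) := by
  set k := ‖a‖ * ‖c‖ with hk
  have hk0 : 0 < k := by
    have h1 : 0 < ‖a‖ := norm_pos_iff.2 ha.ne_zero
    have h2 : 0 < ‖c‖ := norm_pos_iff.2 hc.ne_zero
    positivity
  obtain ⟨η, hη0, hηM, hη⟩ := le_lnPlus hτ b hg hδ (M := (k ^ 2)⁻¹) (by positivity)
  have he0 : 0 < k ^ 2 * η := by positivity
  have he1 : k ^ 2 * η < 1 := by
    rw [lt_inv_comm₀ hη0 (by positivity)] at hηM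
    calc k ^ 2 * η < η⁻¹ * η := by gcongr
      _ = 1 := inv_mul_cancel₀ hη0.ne'
  refine (lnPlus_le hτ (a * b * c) he0 he1).trans ?_
  rw [EReal.coe_le_coe_iff]
  have m := tr_abs_opmono hτ a b c (f := fun t => Real.log (k ^ 2 * η + t))
    (ContinuousOn.log (by fun_prop) (fun t (ht : 0 ≤ t) => by positivity)) (log_opmono he0)
  have hs := spec_sub (cfcAbs_nonneg b)
  have e : cfc (fun t : ℝ => Real.log (k ^ 2 * η + k ^ 2 * t ^ 2)) (cfcAbs b) =
      algebraMap ℝ A (2 * Real.log k) + cfc (fun t : ℝ => Real.log (η + t ^ 2)) (cfcAbs b) := by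
    rw [← cfc_const_add _ _ _ ((cont_logsq hη0).mono hs)
      (IsSelfAdjoint.of_nonneg (cfcAbs_nonneg b))]
    refine cfc_congr fun t ht => ?_
    try simp only
    rw [← mul_add, Real.log_mul (by positivity) (by positivity), Real.log_pow]
    push_cast; ring
  rw [← hk, e, tr_add hτ, tr_algebraMap hτ] at m
  have kd := ker_mono hτ a b c ha hc
  have hL : 0 < -(1 / 2) * Real.log (k ^ 2 * η) := by
    have := Real.log_neg he0 he1; linarith
  have kd' := mul_le_mul_of_nonneg_left kd hL.le
  have hlog : Real.log (k ^ 2 * η) = 2 * Real.log k + Real.log η := by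
    rw [Real.log_mul (by positivity) (by positivity), Real.log_pow]; push_cast; ring
  simp only [traceRank]
  rw [hlog] at kd' ⊢
  nlinarith

end Helpers

/-- for `a, b, c ∈ A` with `a` and `c` invertible and any trace `τ`,
`τ(ln₊|abc|) ≤ ln(‖a‖‖c‖)·rk_τ(b) + τ(ln₊|b|)`. -/
theorem stmt14 {A : Type*} [CStarAlgebra A] (a b c : A) (ha : IsUnit a) (hc : IsUnit c)
    (τ : A → ℂ) (hτ : IsCStarTrace τ) :
    traceLnPlus τ (a * b * c) ≤
      ((Real.log (‖a‖ * ‖c‖) * traceRank τ b : ℝ) : EReal) + traceLnPlus τ b := by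
  let _ : PartialOrder A := CStarAlgebra.spectralOrder A
  have _ : StarOrderedRing A := CStarAlgebra.spectralOrderedRing A
  rcases subsingleton_or_nontrivial A with hA | hA
  · have h0 : ∀ y : A, τ y = 0 := fun y => by
      have := hτ.2.1 0 y
      rwa [zero_smul, zero_mul, Subsingleton.elim (0 : A) y] at this
    have e : Real.log (‖a‖ * ‖c‖) = 0 := by
      rw [Subsingleton.elim a 0]; simp
    rw [e, zero_mul, EReal.coe_zero, zero_add]
    simp only [traceLnPlus, h0]
    exact le_rfl
  · have h1 : (0:ℝ) ≤ (τ 1).re := tr_nonneg hτ zero_le_one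
    have key : ∀ g ∈ lnPlusMajorants, traceLnPlus τ (a * b * c) ≤
        ((Real.log (‖a‖ * ‖c‖) * traceRank τ b + (τ (cfc g (cfcAbs b))).re : ℝ) : EReal) := by
      intro g hg
      refine EReal.le_of_forall_lt_iff_le.1 fun z hz => ?_
      rw [EReal.coe_lt_coe_iff] at hz
      set s := Real.log (‖a‖ * ‖c‖) * traceRank τ b + (τ (cfc g (cfcAbs b))).re with hs
      have hδ : 0 < (z - s) / ((τ 1).re + 1) := div_pos (by linarith) (by linarith)
      refine (main_aux hτ a b c ha hc hg hδ).trans ?_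
      rw [EReal.coe_le_coe_iff]
      have : (z - s) / ((τ 1).re + 1) * (τ 1).re ≤ z - s := by
        rw [div_mul_eq_mul_div, div_le_iff₀ (by linarith)]
        nlinarith
      linarith
    rw [add_comm]
    refine EReal.sub_le_iff_le_add (Or.inl (EReal.coe_ne_bot _)) (Or.inl (EReal.coe_ne_top _)) |>.1 ?_
    refine le_iInf₂ fun g hg => ?_
    refine EReal.sub_le_iff_le_add (Or.inl (EReal.coe_ne_bot _)) (Or.inl (EReal.coe_ne_top _)) |>.2 ?_
    rw [add_comm, ← EReal.coe_add]
    exact key g hg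

end
end
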